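/- Let d ≥ 2, k ≥ 2, 1 ≤ t ≤ k, let ψ ∈ ℂ^d be a unit vector with projector P = |ψ⟩⟨ψ|, let Ω = P + λ(I − P) with λ ∈ [0,1), and let 0 ≤ ε ≤ (d−1)/d with q = dε/(d−1). For the globally white-noisy ensemble state η = (1−q)(|ψ⟩⟨ψ|)^{⊗k} + q·I/d^k on (ℂ^d)^{⊗k}, with S_k the cyclic-shift unitary and D_k = (I + S_k)/2, the passing probability satisfies tr[(Ω^{⊗t} ⊗ I^{⊗(k−t)}) · D_k η D_k†] = 1 − q + (q/2)[(λ + (1−λ)/d)^t + ((d−1)λ^t + 1)/d^k]. -/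

import Mathlib

open Matrix Kronecker BigOperators

noncomputable section

/-- The cyclically previous index: `m - 1 (mod k)`. -/
def prevIdx {k : ℕ} (m : Fin k) : Fin k :=
  ⟨(m.val + (k - 1)) % k, Nat.mod_lt _ m.pos⟩

/-- The cyclic-shift unitary `S_k` on `(ℂ^d)^{⊗k}`, determined by
`S_k (v_1 ⊗ ⋯ ⊗ v_k) = v_k ⊗ v_1 ⊗ ⋯ ⊗ v_{k-1}`, written as a matrix in the
standard tensor-product basis indexed by functions `Fin k → Fin d`. -/
def cyc (d k : ℕ) : Matrix (Fin k → Fin d) (Fin k → Fin d) ℂ :=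
  fun g f => if g = fun m => f (prevIdx m) then 1 else 0

/-- The SWAP projection `D_k = (I + S_k)/2`. -/
def Dk (d k : ℕ) : Matrix (Fin k → Fin d) (Fin k → Fin d) ℂ :=
  (1 / 2 : ℂ) • (1 + cyc d k)

/-- The tensor product `A_1 ⊗ A_2 ⊗ ⋯ ⊗ A_k` of `d × d` matrices, acting
factor-wise on `(ℂ^d)^{⊗k}`. -/
def tensOp {d k : ℕ} (A : Fin k → Matrix (Fin d) (Fin d) ℂ) :
    Matrix (Fin k → Fin d) (Fin k → Fin d) ℂ :=
  fun g f => ∏ m, A m (g m) (f m)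

/-- The tensor product `v_1 ⊗ ⋯ ⊗ v_k` of vectors in `ℂ^d`. -/
def tensVec {d k : ℕ} (v : Fin k → (Fin d → ℂ)) : (Fin k → Fin d) → ℂ :=
  fun f => ∏ m, v m (f m)

/-- The partial trace over the last `k - 1` tensor factors, mapping matrices on
`(ℂ^d)^{⊗k}` to `d × d` matrices by tracing out factors `2` through `k`. -/
def ptraceFirst {d k : ℕ} (M : Matrix (Fin k → Fin d) (Fin k → Fin d) ℂ) :
    Matrix (Fin d) (Fin d) ℂ :=
  fun a b => ∑ r : {i : Fin k // i.val ≠ 0} → Fin d,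
    M (fun m => if h : m.val = 0 then a else r ⟨m, h⟩)
      (fun m => if h : m.val = 0 then b else r ⟨m, h⟩)

/-!
The vector `ψ^{⊗k}` is fixed by `S_k`, hence by `D_k`, so the pure part of `η` survives the SWAP
projection and passes every test. The white-noise part becomes a multiple of
`D_k D_k† = (2 + S_k + S_k†)/4`, because `S_k` is unitary. Against `Ω^{⊗t} ⊗ I^{⊗(k-t)}` the term
`2` gives `2 (tr Ω)^t d^(k-t)`, while contracting the tensor factors around the cycle of `S_k` or
of `S_k†` gives `tr (Ω^t)`. As `P` is a projector, `Ω^n = P + λ^n (I - P)`, which evaluates both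
traces.
-/

section CyclicSum

variable {ι R : Type*} [Fintype ι] [DecidableEq ι] [CommSemiring R]

theorem sum_prod_path_mul_eq_trace {n : ℕ} (A : Fin n → Matrix ι ι R) (B : Matrix ι ι R) :
    ∑ g : Fin (n + 1) → ι, (∏ i, A i (g i.castSucc) (g i.succ)) * B (g (Fin.last n)) (g 0)
      = ((List.ofFn A).prod * B).trace := by
  induction n generalizing B with
  | zero =>
    rw [← (Equiv.funUnique (Fin 1) ι).symm.sum_comp]
    simp [Matrix.trace]
  | succ n ih =>
    rw [List.ofFn_succ', List.concat_eq_append, List.prod_append, List.prod_singleton, mul_assoc,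
      ← ih, ← (Fin.snocEquiv fun _ => ι).sum_comp, Fintype.sum_prod_type_right]
    refine Finset.sum_congr rfl fun g _ => ?_
    have snoc_zero (b : ι) : (Fin.snoc g b : Fin (n + 2) → ι) 0 = g 0 :=
      Fin.snoc_castSucc (α := fun _ => ι) b g 0
    simp only [Fin.snocEquiv, Equiv.coe_fn_mk, Fin.prod_univ_castSucc, Fin.succ_castSucc,
      Fin.snoc_castSucc, Fin.succ_last, Fin.snoc_last, snoc_zero, Matrix.mul_apply,
      Finset.mul_sum, mul_assoc]

theorem sum_prod_finRotate_eq_trace {k : ℕ} (hk : k ≠ 0) (A : Fin k → Matrix ι ι R) :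
    ∑ g : Fin k → ι, ∏ m, A m (g m) (g (finRotate k m)) = (List.ofFn A).prod.trace := by
  obtain ⟨n, rfl⟩ := Nat.exists_eq_succ_of_ne_zero hk
  rw [List.ofFn_succ', List.concat_eq_append, List.prod_append, List.prod_singleton,
    ← sum_prod_path_mul_eq_trace]
  simp only [Nat.succ_eq_add_one, Fin.prod_univ_castSucc, finRotate_apply,
    Fin.coeSucc_eq_succ, Fin.last_add_one]

end CyclicSum

theorem prod_ite_val_lt {M : Type*} [CommMonoid M] {k t : ℕ} (ht : t ≤ k) (a b : M) :
    ∏ m : Fin k, (if m.val < t then a else b) = a ^ t * b ^ (k - t) := by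
  have card_not_lt : (Finset.univ.filter fun m : Fin k => ¬ m.val < t).card = k - t := by
    rw [← Finset.compl_filter, Finset.card_compl, Fin.card_filter_val_lt, Fintype.card_fin,
      min_eq_right ht]
  rw [Finset.prod_ite, Finset.prod_const, Finset.prod_const, Fin.card_filter_val_lt,
    min_eq_right ht, card_not_lt]

theorem list_prod_ofFn_ite_val_lt {M : Type*} [Monoid M] {k t : ℕ} (ht : t ≤ k) (a : M) :
    (List.ofFn fun m : Fin k => if m.val < t then a else 1).prod = a ^ t := by
  have ofFn_eq : (List.ofFn fun m : Fin k => if m.val < t then a else 1)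
      = List.replicate t a ++ List.replicate (k - t) 1 := by
    refine List.ext_getElem (by simp [ht]) fun i _ _ => ?_
    simp [List.getElem_append]
  rw [ofFn_eq, List.prod_append, List.prod_replicate, List.prod_replicate, one_pow, mul_one]

theorem add_smul_one_sub_pow {R A : Type*} [CommSemiring R] [Ring A] [Algebra R A]
    {p : A} (hp : IsIdempotentElem p) (c : R) (n : ℕ) :
    (p + c • (1 - p)) ^ n = p + c ^ n • (1 - p) := by
  induction n with
  | zero => simp
  | succ n ih =>
    simp only [pow_succ, ih, add_mul, mul_add, mul_smul_comm, smul_mul_assoc, hp.eq,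
      hp.one_sub.eq, hp.mul_one_sub_self, hp.one_sub_mul_self, smul_zero, add_zero, zero_add,
      smul_smul, mul_comm c]

section Tensor

variable {d k : ℕ}

theorem tensOp_mul_tensOp (A B : Fin k → Matrix (Fin d) (Fin d) ℂ) :
    tensOp A * tensOp B = tensOp fun m => A m * B m := by
  ext g f
  simp only [Matrix.mul_apply, tensOp, ← Finset.prod_mul_distrib, Finset.prod_univ_sum,
    Fintype.piFinset_univ]

theorem trace_tensOp (A : Fin k → Matrix (Fin d) (Fin d) ℂ) :
    (tensOp A).trace = ∏ m, (A m).trace := by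
  simp only [Matrix.trace, Matrix.diag, tensOp, Finset.prod_univ_sum, Fintype.piFinset_univ]

theorem transpose_tensOp (A : Fin k → Matrix (Fin d) (Fin d) ℂ) :
    (tensOp A)ᵀ = tensOp fun m => (A m)ᵀ :=
  rfl

theorem tensOp_vecMulVec_star (v : Fin k → Fin d → ℂ) :
    tensOp (fun m => vecMulVec (v m) (star (v m)))
      = vecMulVec (tensVec v) (star (tensVec v)) := by
  ext g f
  simp [tensOp, tensVec, vecMulVec_apply, Finset.prod_mul_distrib]

end Tensor

section CyclicShift

theorem prevIdx_eq_finRotate_symm {k : ℕ} (m : Fin k) : prevIdx m = (finRotate k).symm m := by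
  have := m.neZero
  have one_le_k : 1 ≤ k := m.pos
  rw [Equiv.eq_symm_apply, finRotate_apply]
  ext
  simp [prevIdx, Fin.val_add, add_assoc, Nat.sub_add_cancel one_le_k, Nat.mod_eq_of_lt m.isLt]

variable (d k : ℕ)

/-- The permutation `g ↦ g ∘ finRotate k` of the tensor-product basis whose permutation matrix is
`cyc d k`. -/
def basisShift : Equiv.Perm (Fin k → Fin d) :=
  (finRotate k).symm.arrowCongr (Equiv.refl (Fin d))

theorem cyc_eq_permMatrix : cyc d k = (basisShift d k).permMatrix ℂ := by
  have eq_comp_prevIdx_iff (g f : Fin k → Fin d) :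
      (g = fun m => f (prevIdx m)) ↔ f = basisShift d k g := by
    simp only [prevIdx_eq_finRotate_symm]
    exact (Equiv.eq_comp_symm (finRotate k) g f).trans eq_comm
  ext g f
  simp only [cyc, eq_comp_prevIdx_iff, PEquiv.toMatrix_toPEquiv_apply, Pi.single_apply]

theorem cyc_mul_conjTranspose_cyc : cyc d k * (cyc d k)ᴴ = 1 := by
  rw [cyc_eq_permMatrix, conjTranspose_permMatrix, ← permMatrix_mul, inv_mul_cancel,
    permMatrix_one]

theorem conjTranspose_cyc_eq_transpose : (cyc d k)ᴴ = (cyc d k)ᵀ := by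
  rw [cyc_eq_permMatrix, conjTranspose_permMatrix, transpose_permMatrix]

variable {d k}

theorem cyc_mulVec_tensVec_const (v : Fin d → ℂ) :
    cyc d k *ᵥ tensVec (fun _ => v) = tensVec fun _ => v := by
  rw [cyc_eq_permMatrix, permMatrix_mulVec]
  ext g
  exact Equiv.prod_comp (finRotate k) fun m => v (g m)

theorem trace_tensOp_mul_conjTranspose_cyc (hk : k ≠ 0) (A : Fin k → Matrix (Fin d) (Fin d) ℂ) :
    (tensOp A * (cyc d k)ᴴ).trace = (List.ofFn A).prod.trace := by
  rw [cyc_eq_permMatrix, conjTranspose_permMatrix, Equiv.Perm.permMatrix,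
    PEquiv.mul_toMatrix_toPEquiv, ← sum_prod_finRotate_eq_trace hk]
  rfl

theorem trace_tensOp_mul_cyc (hk : k ≠ 0) (A : Fin k → Matrix (Fin d) (Fin d) ℂ) :
    (tensOp A * cyc d k).trace = (List.ofFn fun m => (A m)ᵀ).prod.trace := by
  rw [← trace_tensOp_mul_conjTranspose_cyc hk, conjTranspose_cyc_eq_transpose, ← transpose_tensOp,
    trace_transpose_mul]

theorem Dk_mulVec_tensVec_const (v : Fin d → ℂ) :
    Dk d k *ᵥ tensVec (fun _ => v) = tensVec fun _ => v := by
  rw [Dk, smul_mulVec, add_mulVec, one_mulVec, cyc_mulVec_tensVec_const, ← two_smul ℂ, smul_smul]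
  norm_num

theorem Dk_mul_tensOp_vecMulVec_star_mul (v : Fin d → ℂ) :
    Dk d k * tensOp (fun _ => vecMulVec v (star v)) * (Dk d k)ᴴ
      = tensOp fun _ => vecMulVec v (star v) := by
  rw [tensOp_vecMulVec_star, mul_vecMulVec, vecMulVec_mul, ← star_mulVec,
    Dk_mulVec_tensVec_const]

theorem Dk_mul_conjTranspose_Dk :
    Dk d k * (Dk d k)ᴴ = (1 / 4 : ℂ) • ((2 : ℂ) • 1 + cyc d k + (cyc d k)ᴴ) := by
  have conjTranspose_Dk : (Dk d k)ᴴ = (1 / 2 : ℂ) • (1 + (cyc d k)ᴴ) := by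
    simp [Dk, conjTranspose_smul]
  rw [conjTranspose_Dk, Dk, smul_mul_smul_comm, add_mul, one_mul, mul_add, mul_one,
    cyc_mul_conjTranspose_cyc]
  module

end CyclicShift

section TestOperator

/-- The test operator `Ω^{⊗t} ⊗ I^{⊗(k-t)}`, which verifies the first `t` of `k` copies by `Ω`; it
is `Ω^{⊗k}` when `k < t`. -/
def testOp {d : ℕ} (k t : ℕ) (Ω : Matrix (Fin d) (Fin d) ℂ) :
    Matrix (Fin k → Fin d) (Fin k → Fin d) ℂ :=
  tensOp fun m : Fin k => if m.val < t then Ω else 1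

variable {d k t : ℕ}

theorem trace_testOp (ht : t ≤ k) (Ω : Matrix (Fin d) (Fin d) ℂ) :
    (testOp k t Ω).trace = Ω.trace ^ t * (d : ℂ) ^ (k - t) := by
  simp only [testOp, trace_tensOp, apply_ite Matrix.trace, prod_ite_val_lt ht, trace_one,
    Fintype.card_fin]

theorem trace_testOp_mul_tensOp_const (ht : t ≤ k) (Ω ρ : Matrix (Fin d) (Fin d) ℂ) :
    (testOp k t Ω * tensOp fun _ => ρ).trace = (Ω * ρ).trace ^ t * ρ.trace ^ (k - t) := by
  simp only [testOp, tensOp_mul_tensOp, trace_tensOp, ite_mul, one_mul, apply_ite Matrix.trace,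
    prod_ite_val_lt ht]

theorem trace_testOp_mul_conjTranspose_cyc (hk : k ≠ 0) (ht : t ≤ k)
    (Ω : Matrix (Fin d) (Fin d) ℂ) :
    (testOp k t Ω * (cyc d k)ᴴ).trace = (Ω ^ t).trace := by
  rw [testOp, trace_tensOp_mul_conjTranspose_cyc hk, list_prod_ofFn_ite_val_lt ht]

theorem trace_testOp_mul_cyc (hk : k ≠ 0) (ht : t ≤ k) (Ω : Matrix (Fin d) (Fin d) ℂ) :
    (testOp k t Ω * cyc d k).trace = (Ω ^ t).trace := by
  simp only [testOp, trace_tensOp_mul_cyc hk, apply_ite transpose, transpose_one,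
    list_prod_ofFn_ite_val_lt ht, ← transpose_pow, trace_transpose]

theorem trace_testOp_mul_Dk_mul_conjTranspose_Dk (hk : k ≠ 0) (ht : t ≤ k)
    (Ω : Matrix (Fin d) (Fin d) ℂ) :
    (testOp k t Ω * (Dk d k * (Dk d k)ᴴ)).trace
      = (Ω.trace ^ t * (d : ℂ) ^ (k - t) + (Ω ^ t).trace) / 2 := by
  simp only [Dk_mul_conjTranspose_Dk, mul_smul_comm, mul_add, mul_one, trace_smul, trace_add,
    trace_testOp ht, trace_testOp_mul_cyc hk ht, trace_testOp_mul_conjTranspose_cyc hk ht,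
    smul_eq_mul]
  ring

end TestOperator

section WhiteNoise

variable {d : ℕ}

/-- The homogeneous verification operator `P + c (I - P)` of the projector `P = |ψ⟩⟨ψ|`. -/
def homogeneousOp (ψ : Fin d → ℂ) (c : ℂ) : Matrix (Fin d) (Fin d) ℂ :=
  vecMulVec ψ (star ψ) + c • (1 - vecMulVec ψ (star ψ))

/-- The mixture `(1 - q) (|ψ⟩⟨ψ|)^{⊗k} + q I/d^k` of `k` pure copies with global white noise. -/
def noisyState (k : ℕ) (ψ : Fin d → ℂ) (q : ℂ) : Matrix (Fin k → Fin d) (Fin k → Fin d) ℂ :=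
  (1 - q) • tensOp (fun _ => vecMulVec ψ (star ψ)) + q • ((d : ℂ) ^ k)⁻¹ • 1

theorem trace_vecMulVec_star_of_unit {ψ : Fin d → ℂ} (hψ : star ψ ⬝ᵥ ψ = 1) :
    (vecMulVec ψ (star ψ)).trace = 1 := by
  rw [trace_vecMulVec, dotProduct_comm, hψ]

theorem isIdempotentElem_vecMulVec_star {ψ : Fin d → ℂ} (hψ : star ψ ⬝ᵥ ψ = 1) :
    IsIdempotentElem (vecMulVec ψ (star ψ)) := by
  rw [IsIdempotentElem, vecMulVec_mul_vecMulVec, hψ, one_smul]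

theorem homogeneousOp_mul_vecMulVec_star {ψ : Fin d → ℂ} (hψ : star ψ ⬝ᵥ ψ = 1) (c : ℂ) :
    homogeneousOp ψ c * vecMulVec ψ (star ψ) = vecMulVec ψ (star ψ) := by
  have hP := isIdempotentElem_vecMulVec_star hψ
  rw [homogeneousOp, add_mul, smul_mul_assoc, hP.one_sub_mul_self, smul_zero, add_zero, hP.eq]

theorem trace_homogeneousOp_pow {ψ : Fin d → ℂ} (hψ : star ψ ⬝ᵥ ψ = 1) (c : ℂ) (n : ℕ) :
    (homogeneousOp ψ c ^ n).trace = 1 + c ^ n * (d - 1) := by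
  rw [homogeneousOp, add_smul_one_sub_pow (isIdempotentElem_vecMulVec_star hψ),
    trace_add, trace_smul, trace_sub, trace_one, trace_vecMulVec_star_of_unit hψ, Fintype.card_fin,
    smul_eq_mul]

theorem Dk_mul_noisyState_mul (k : ℕ) (ψ : Fin d → ℂ) (q : ℂ) :
    Dk d k * noisyState k ψ q * (Dk d k)ᴴ
      = (1 - q) • tensOp (fun _ => vecMulVec ψ (star ψ))
        + q • ((d : ℂ) ^ k)⁻¹ • (Dk d k * (Dk d k)ᴴ) := by
  simp only [noisyState, mul_add, add_mul, mul_smul_comm, smul_mul_assoc, mul_one,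
    Dk_mul_tensOp_vecMulVec_star_mul]

theorem stmt12_general {k t : ℕ} (hk : k ≠ 0) (ht : t ≤ k) {ψ : Fin d → ℂ}
    (hψ : star ψ ⬝ᵥ ψ = 1) (c q : ℂ) :
    (testOp k t (homogeneousOp ψ c) * (Dk d k * noisyState k ψ q * (Dk d k)ᴴ)).trace
      = 1 - q + q / 2 * ((c + (1 - c) / d) ^ t + ((d - 1) * c ^ t + 1) / d ^ k) := by
  have hd : (d : ℂ) ≠ 0 := by
    intro h
    obtain rfl : d = 0 := by exact_mod_cast h
    simp at hψ
  have trace_homogeneousOp : (homogeneousOp ψ c).trace = d * (c + (1 - c) / d) := by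
    rw [← pow_one (homogeneousOp ψ c), trace_homogeneousOp_pow hψ]
    field_simp
    ring
  have pow_d : (d : ℂ) ^ k = d ^ t * d ^ (k - t) := (pow_mul_pow_sub _ ht).symm
  rw [Dk_mul_noisyState_mul, mul_add, trace_add]
  simp only [mul_smul_comm, trace_smul, smul_eq_mul, trace_testOp_mul_tensOp_const ht,
    homogeneousOp_mul_vecMulVec_star hψ, trace_vecMulVec_star_of_unit hψ, one_pow, mul_one,
    trace_testOp_mul_Dk_mul_conjTranspose_Dk hk ht, trace_homogeneousOp_pow hψ,
    trace_homogeneousOp, mul_pow]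
  rw [pow_d]
  field_simp
  ring

end WhiteNoise

/-- for the globally white-noisy ensemble state
`η = (1−q)(|ψ⟩⟨ψ|)^{⊗k} + q·I/d^k` with `q = dε/(d−1)`, the passing probability is
`tr[(Ω^{⊗t} ⊗ I^{⊗(k−t)}) · D_k η D_k†]
  = 1 − q + (q/2)[(λ + (1−λ)/d)^t + ((d−1)λ^t + 1)/d^k]`. -/
theorem stmt12 (d k t : ℕ) (hd : 2 ≤ d) (hk : 2 ≤ k) (ht1 : 1 ≤ t) (ht2 : t ≤ k)
    (ψ : Fin d → ℂ) (hψ : star ψ ⬝ᵥ ψ = 1)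
    (lam ε q : ℝ) (hlam0 : 0 ≤ lam) (hlam1 : lam < 1)
    (hε0 : 0 ≤ ε) (hε1 : ε ≤ ((d : ℝ) - 1) / (d : ℝ))
    (hq : q = (d : ℝ) * ε / ((d : ℝ) - 1))
    (P Ω : Matrix (Fin d) (Fin d) ℂ)
    (hP : P = vecMulVec ψ (star ψ))
    (hΩ : Ω = P + (lam : ℂ) • (1 - P))
    (η : Matrix (Fin k → Fin d) (Fin k → Fin d) ℂ)
    (hη : η = ((1 - q : ℝ) : ℂ) • tensOp (fun _ : Fin k => P)
        + ((q : ℝ) : ℂ) • ((d : ℂ) ^ k)⁻¹ • (1 : Matrix (Fin k → Fin d) (Fin k → Fin d) ℂ)) :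
    (tensOp (fun m : Fin k => if m.val < t then Ω else 1)
        * (Dk d k * η * (Dk d k)ᴴ)).trace
      = ((1 - q + q / 2 * ((lam + (1 - lam) / (d : ℝ)) ^ t
          + (((d : ℝ) - 1) * lam ^ t + 1) / (d : ℝ) ^ k) : ℝ) : ℂ) := by
  subst hP hΩ hη
  simpa [testOp, homogeneousOp, noisyState] using stmt12_general (by omega) ht2 hψ (lam : ℂ) (q : ℂ)
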